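/- Fix d ≥ 1, let c_d > 0, and let Γ : ℝ^d → ℝ be a measurable function with 0 ≤ Γ(z) ≤ 1 and 1 − Γ(z) ≤ c_d‖z‖₂² for all z ∈ ℝ^d. Define the pseudometric d_Γ(f,g) = (2∫₀ᵗ (1 − Γ(f(s) − g(s))) ds)^{1/2} on continuous functions [0,t] → ℝ^d. Then there exist constants c₁ > 1 and c₂ > 0 (depending only on d and c_d) such that for every t > 0, C > 0, and ε > 0, the Cameron–Martin ball H_t(C) = { f : [0,t] → ℝ^d absolutely continuous, f(0) = 0, (∫₀ᵗ ‖f'‖₂²)^{1/2} ≤ C } can be covered by at most c₁ · exp(c₂ · C t / ε) balls of radius ε in the pseudometric d_Γ. -/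

import Mathlib

open Real MeasureTheory

/-- The Cameron–Martin ball `H_t(C)`. -/
def CMBall (d : ℕ) (T R : ℝ) : Set (ℝ → EuclideanSpace ℝ (Fin d)) :=
  {f | f 0 = 0 ∧ ∃ f' : ℝ → EuclideanSpace ℝ (Fin d),
      IntervalIntegrable f' MeasureTheory.volume 0 T ∧
      IntervalIntegrable (fun s => ‖f' s‖ ^ 2) MeasureTheory.volume 0 T ∧
      (∀ s ∈ Set.Icc (0:ℝ) T, f s = ∫ u in (0:ℝ)..s, f' u) ∧
      Real.sqrt (∫ s in (0:ℝ)..T, ‖f' s‖ ^ 2) ≤ R}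

/-- The canonical pseudometric of the Gaussian field with correlation `Γ`. -/
noncomputable def dGamma (d : ℕ) (t : ℝ) (Γ : EuclideanSpace ℝ (Fin d) → ℝ)
    (f g : ℝ → EuclideanSpace ℝ (Fin d)) : ℝ :=
  Real.sqrt (2 * ∫ s in (0:ℝ)..t, (1 - Γ (f s - g s)))

/-!
Cut `[0, t]` into `n ≈ C t / ε` steps of length `h`. By Cauchy–Schwarz, a path of `H_t(C)` with
energy `e` on some step moves by at most `√(h e)` there, so in `L²` it is determined up to `O(h C)`
by its grid values, which may further be rounded down to a lattice of mesh `δ ≈ ε / √(d t)`. The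
rounded values are encoded by their increments in units of `δ`, integers of total absolute value at
most `h C² / δ² + 2 n d = O(n d)`: an increment `j δ` costs energy `j² δ² / h`, and rounding turns
`j` into an integer of size at most `|j| + 1 ≤ j² + 2`. Hence there are only `exp (O(n d))` codes,
with no logarithm of `ε` in the exponent. Two paths with the same code differ by a path that is
small on the grid and has energy at most `4 C²`, so they are `ε`-close in `L²`, and one path per
code is a net. Since `d_Γ(f, g) ≤ √(2 c_d) ‖f - g‖_{L²}`, this also gives a net for `d_Γ`.
-/

section IntegerL1Ball

/-- The closed `ℓ¹`-ball of radius `K` around `0` in `ι → ℤ`. It is cut out of a box in order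
to be a `Finset`. -/
noncomputable def intL1Ball (ι : Type*) [Fintype ι] [DecidableEq ι] (K : ℕ) : Finset (ι → ℤ) :=
  {m ∈ Fintype.piFinset fun _ : ι => Finset.Icc (-(K : ℤ)) K | ∑ i, (m i).natAbs ≤ K}

variable {ι : Type*} [Fintype ι] [DecidableEq ι] {K : ℕ}

lemma mem_intL1Ball {m : ι → ℤ} : m ∈ intL1Ball ι K ↔ ∑ i, (m i).natAbs ≤ K := by
  simp only [intL1Ball, Finset.mem_filter, Fintype.mem_piFinset, Finset.mem_Icc,
    and_iff_right_iff_imp]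
  intro hm i
  have hi : (m i).natAbs ≤ ∑ j, (m j).natAbs :=
    Finset.single_le_sum (f := fun j => (m j).natAbs) (fun _ _ => Nat.zero_le _)
      (Finset.mem_univ i)
  omega

lemma sum_Icc_neg_half_pow_natAbs (K : ℕ) :
    ∑ k ∈ Finset.Icc (-(K : ℤ)) K, (1 / 2 : ℝ) ^ k.natAbs = 3 - 2 * (1 / 2) ^ K := by
  induction K with
  | zero => norm_num
  | succ K ih =>
    have Icc_succ : Finset.Icc (-((K + 1 : ℕ) : ℤ)) ((K + 1 : ℕ) : ℤ) =
        insert (-((K + 1 : ℕ) : ℤ)) (insert ((K + 1 : ℕ) : ℤ) (Finset.Icc (-(K : ℤ)) K)) := by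
      ext x
      simp only [Finset.mem_insert, Finset.mem_Icc]
      omega
    rw [Icc_succ, Finset.sum_insert, Finset.sum_insert, ih, Int.natAbs_neg, Int.natAbs_natCast,
      pow_succ]
    · ring
    · simp
    · simp only [Finset.mem_insert, Finset.mem_Icc]
      omega

-- Chernoff's trick: weight `m` by `2 ^ (-‖m‖₁)`, a product over the coordinates of total mass
-- at most `3 ^ |ι|`.
lemma card_intL1Ball_le : (intL1Ball ι K).card ≤ 2 ^ K * 3 ^ Fintype.card ι := by
  have half_pow_pos : (0 : ℝ) < (1 / 2) ^ K := by positivity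
  have weight_le : ((intL1Ball ι K).card : ℝ) * (1 / 2) ^ K ≤ 3 ^ Fintype.card ι :=
    calc ((intL1Ball ι K).card : ℝ) * (1 / 2) ^ K
        ≤ ∑ m ∈ intL1Ball ι K, ∏ i, (1 / 2 : ℝ) ^ (m i).natAbs := by
          rw [← nsmul_eq_mul]
          refine Finset.card_nsmul_le_sum _ _ _ fun m hm => ?_
          rw [Finset.prod_pow_eq_pow_sum]
          exact pow_le_pow_of_le_one (by norm_num) (by norm_num) (mem_intL1Ball.1 hm)
      _ ≤ ∑ m ∈ Fintype.piFinset fun _ : ι => Finset.Icc (-(K : ℤ)) K,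
            ∏ i, (1 / 2 : ℝ) ^ (m i).natAbs :=
          Finset.sum_le_sum_of_subset_of_nonneg (Finset.filter_subset _ _)
            fun _ _ _ => by positivity
      _ = (3 - 2 * (1 / 2) ^ K) ^ Fintype.card ι := by
          rw [Finset.sum_prod_piFinset _ fun _ (k : ℤ) => (1 / 2 : ℝ) ^ k.natAbs,
            sum_Icc_neg_half_pow_natAbs, Finset.prod_const, Finset.card_univ]
      _ ≤ 3 ^ Fintype.card ι := by
          have half_pow_le : (1 / 2 : ℝ) ^ K ≤ 1 := pow_le_one₀ (by norm_num) (by norm_num)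
          gcongr <;> linarith
  have card_le : ((intL1Ball ι K).card : ℝ) ≤ 2 ^ K * 3 ^ Fintype.card ι := by
    rwa [one_div, inv_pow, ← div_eq_mul_inv, div_le_iff₀' (by positivity)] at weight_le
  exact_mod_cast card_le

end IntegerL1Ball

lemma exists_finset_subset_card_le_of_mapsTo {α β : Type*} (code : α → β) {A : Set α}
    {T : Finset β} (hcode : Set.MapsTo code A T) :
    ∃ S : Finset α, ↑S ⊆ A ∧ S.card ≤ T.card ∧ ∀ f ∈ A, ∃ g ∈ S, code g = code f := by
  classical
  obtain ⟨S, hSA, hS⟩ := Set.exists_subset_bijOn A code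
  have S_finite : S.Finite :=
    Set.Finite.of_finite_image (hS.image_eq ▸ T.finite_toSet.subset hcode.image_subset) hS.injOn
  refine ⟨S_finite.toFinset, by simpa using hSA, ?_, fun f hf => ?_⟩
  · refine Finset.card_le_card_of_injOn code (fun g hg => ?_) ?_
    · exact hcode (hSA (S_finite.mem_toFinset.1 hg))
    · simpa using hS.injOn
  · obtain ⟨g, hg, hgf⟩ := hS.surjOn (Set.mem_image_of_mem code hf)
    exact ⟨g, S_finite.mem_toFinset.2 hg, hgf⟩

lemma norm_integral_sq_le_measureReal_mul_integral_norm_sq {α E : Type*} [MeasurableSpace α]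
    [NormedAddCommGroup E] [NormedSpace ℝ E] {μ : Measure α} [IsFiniteMeasure μ] {f : α → E}
    (hf : MemLp f 2 μ) :
    ‖∫ x, f x ∂μ‖ ^ 2 ≤ μ.real Set.univ * ∫ x, ‖f x‖ ^ 2 ∂μ := by
  have norm_integrable : Integrable (fun x => ‖f x‖) μ := (hf.integrable one_le_two).norm
  have sq_integrable : Integrable (fun x => ‖f x‖ ^ 2) μ := hf.integrable_norm_pow two_ne_zero
  have quadratic_nonneg (c : ℝ) :
      0 ≤ μ.real Set.univ * (c * c) + -(2 * ∫ x, ‖f x‖ ∂μ) * c + ∫ x, ‖f x‖ ^ 2 ∂μ :=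
    calc 0 ≤ ∫ x, (‖f x‖ - c) ^ 2 ∂μ := integral_nonneg fun _ => sq_nonneg _
      _ = ∫ x, (‖f x‖ ^ 2 - 2 * c * ‖f x‖ + c ^ 2) ∂μ := by congr! 2; ring
      _ = _ := by
        rw [integral_add (by fun_prop) (by fun_prop), integral_sub (by fun_prop) (by fun_prop),
          integral_const_mul, integral_const, smul_eq_mul]
        ring
  have discrim_nonpos := discrim_le_zero quadratic_nonneg
  have norm_le : ‖∫ x, f x ∂μ‖ ^ 2 ≤ (∫ x, ‖f x‖ ∂μ) ^ 2 := by
    gcongr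
    exact norm_integral_le_integral_norm f
  rw [discrim] at discrim_nonpos
  linarith

lemma sum_intervalIntegral_grid {g : ℝ → ℝ} {n : ℕ} {h : ℝ} (hh : 0 ≤ h)
    (hg : IntervalIntegrable g volume 0 (n * h)) :
    ∑ i ∈ Finset.range n, ∫ s in (i * h)..((i + 1) * h), g s = ∫ s in (0 : ℝ)..(n * h), g s := by
  have integrable_cell : ∀ i < n,
      IntervalIntegrable g volume ((i : ℕ) * h) ((i + 1 : ℕ) * h) := fun i hi => by
    have left_nonneg : 0 ≤ (i : ℝ) * h := by positivity
    have left_le_right : (i : ℝ) * h ≤ (i + 1 : ℕ) * h := by gcongr; omega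
    have right_le : ((i + 1 : ℕ) : ℝ) * h ≤ n * h := by gcongr; omega
    refine hg.mono_set ?_
    rw [Set.uIcc_of_le left_le_right, Set.uIcc_of_le (by positivity)]
    exact Set.Icc_subset_Icc left_nonneg right_le
  simpa using intervalIntegral.sum_integral_adjacent_intervals
    (a := fun i : ℕ => (i : ℝ) * h) integrable_cell

/-- `f` is the primitive on `[0, T]`, vanishing at `0`, of the square-integrable function `f'`:
the absolutely continuous paths of finite energy underlying the Cameron–Martin ball. -/
structure IsL2Primitive {E : Type*} [NormedAddCommGroup E] [NormedSpace ℝ E] (T : ℝ)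
    (f' f : ℝ → E) : Prop where
  memLp : MemLp f' 2 (volume.restrict (Set.Ioc 0 T))
  eq_integral : ∀ s ∈ Set.Icc 0 T, f s = ∫ u in (0 : ℝ)..s, f' u

namespace IsL2Primitive

variable {E : Type*} [NormedAddCommGroup E] [NormedSpace ℝ E] {T a b h : ℝ} {n : ℕ}
  {f f' g g' : ℝ → E}

lemma memLp_Ioc (hf : IsL2Primitive T f' f) (ha : 0 ≤ a) (hb : b ≤ T) :
    MemLp f' 2 (volume.restrict (Set.Ioc a b)) :=
  hf.memLp.mono_measure (Measure.restrict_mono (Set.Ioc_subset_Ioc ha hb) le_rfl)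

lemma intervalIntegrable (hf : IsL2Primitive T f' f) (ha : 0 ≤ a) (hab : a ≤ b) (hb : b ≤ T) :
    IntervalIntegrable f' volume a b :=
  (intervalIntegrable_iff_integrableOn_Ioc_of_le hab).2 ((hf.memLp_Ioc ha hb).integrable one_le_two)

lemma intervalIntegrable_norm_sq (hf : IsL2Primitive T f' f) (ha : 0 ≤ a) (hab : a ≤ b)
    (hb : b ≤ T) : IntervalIntegrable (fun s => ‖f' s‖ ^ 2) volume a b :=
  (intervalIntegrable_iff_integrableOn_Ioc_of_le hab).2
    ((hf.memLp_Ioc ha hb).integrable_norm_pow two_ne_zero)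

lemma sub (hf : IsL2Primitive T f' f) (hg : IsL2Primitive T g' g) :
    IsL2Primitive T (f' - g') (f - g) where
  memLp := hf.memLp.sub hg.memLp
  eq_integral s hs := by
    simp only [Pi.sub_apply]
    rw [intervalIntegral.integral_sub (hf.intervalIntegrable le_rfl hs.1 hs.2)
      (hg.intervalIntegrable le_rfl hs.1 hs.2), hf.eq_integral s hs, hg.eq_integral s hs]

lemma continuousOn (hf : IsL2Primitive T f' f) (hT : 0 ≤ T) : ContinuousOn f (Set.Icc 0 T) := by
  have continuousOn_integral := intervalIntegral.continuousOn_primitive_interval'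
    (hf.intervalIntegrable le_rfl hT le_rfl) Set.left_mem_uIcc
  rw [Set.uIcc_of_le hT] at continuousOn_integral
  exact continuousOn_integral.congr hf.eq_integral

lemma norm_sub_sq_le (hf : IsL2Primitive T f' f) (ha : 0 ≤ a) (hab : a ≤ b) (hb : b ≤ T) :
    ‖f b - f a‖ ^ 2 ≤ (b - a) * ∫ u in a..b, ‖f' u‖ ^ 2 := by
  have sub_eq : f b - f a = ∫ u in a..b, f' u := by
    rw [hf.eq_integral b ⟨ha.trans hab, hb⟩, hf.eq_integral a ⟨ha, hab.trans hb⟩]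
    exact intervalIntegral.integral_interval_sub_left
      (hf.intervalIntegrable le_rfl (ha.trans hab) hb)
      (hf.intervalIntegrable le_rfl ha (hab.trans hb))
  rw [sub_eq, intervalIntegral.integral_of_le hab, intervalIntegral.integral_of_le hab]
  simpa [hab] using norm_integral_sq_le_measureReal_mul_integral_norm_sq (hf.memLp_Ioc ha hb)

lemma integral_norm_sq_le_of_le (hf : IsL2Primitive T f' f) (ha : 0 ≤ a) (hab : a ≤ b)
    (hb : b ≤ T) :
    ∫ s in a..b, ‖f s‖ ^ 2 ≤
      2 * (b - a) ^ 2 * (∫ u in a..b, ‖f' u‖ ^ 2) + 2 * (b - a) * ‖f a‖ ^ 2 := by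
  have pointwise_le : ∀ s ∈ Set.Icc a b,
      ‖f s‖ ^ 2 ≤ 2 * ((b - a) * ∫ u in a..b, ‖f' u‖ ^ 2) + 2 * ‖f a‖ ^ 2 := fun s hs => by
    have increment_le : ‖f s - f a‖ ^ 2 ≤ (b - a) * ∫ u in a..b, ‖f' u‖ ^ 2 := by
      refine (hf.norm_sub_sq_le ha hs.1 (hs.2.trans hb)).trans ?_
      refine mul_le_mul (by linarith [hs.2]) ?_
        (intervalIntegral.integral_nonneg hs.1 fun _ _ => sq_nonneg _) (by linarith)
      exact intervalIntegral.integral_mono_interval le_rfl hs.1 hs.2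
        (Filter.Eventually.of_forall fun _ => sq_nonneg _)
        (hf.intervalIntegrable_norm_sq ha hab hb)
    calc ‖f s‖ ^ 2 = ‖(f s - f a) + f a‖ ^ 2 := by rw [sub_add_cancel]
      _ ≤ (‖f s - f a‖ + ‖f a‖) ^ 2 := by gcongr; exact norm_add_le _ _
      _ ≤ 2 * (‖f s - f a‖ ^ 2 + ‖f a‖ ^ 2) := add_sq_le
      _ ≤ _ := by linarith
  have continuousOn_norm_sq : ContinuousOn (fun s => ‖f s‖ ^ 2) (Set.uIcc a b) := by
    rw [Set.uIcc_of_le hab]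
    exact ((hf.continuousOn (ha.trans (hab.trans hb))).mono (Set.Icc_subset_Icc ha hb)).norm.pow 2
  calc ∫ s in a..b, ‖f s‖ ^ 2
      ≤ ∫ _ in a..b, (2 * ((b - a) * ∫ u in a..b, ‖f' u‖ ^ 2) + 2 * ‖f a‖ ^ 2) :=
        intervalIntegral.integral_mono_on hab continuousOn_norm_sq.intervalIntegrable
          intervalIntegrable_const pointwise_le
    _ = _ := by
        rw [intervalIntegral.integral_const, smul_eq_mul]
        ring

lemma intervalIntegrable_norm_sq_self (hf : IsL2Primitive T f' f) (hT : 0 ≤ T) :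
    IntervalIntegrable (fun s => ‖f s‖ ^ 2) volume 0 T :=
  ((hf.continuousOn hT).norm.pow 2).intervalIntegrable_of_Icc hT

lemma integral_norm_sq_sub_le (hf : IsL2Primitive T f' f) (hg : IsL2Primitive T g' g)
    (hT : 0 ≤ T) :
    ∫ s in (0 : ℝ)..T, ‖(f' - g') s‖ ^ 2 ≤
      2 * ((∫ s in (0 : ℝ)..T, ‖f' s‖ ^ 2) + ∫ s in (0 : ℝ)..T, ‖g' s‖ ^ 2) := by
  have f_energy_integrable := hf.intervalIntegrable_norm_sq le_rfl hT le_rfl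
  have g_energy_integrable := hg.intervalIntegrable_norm_sq le_rfl hT le_rfl
  rw [← intervalIntegral.integral_add f_energy_integrable g_energy_integrable,
    ← intervalIntegral.integral_const_mul]
  refine intervalIntegral.integral_mono_on hT
    ((hf.sub hg).intervalIntegrable_norm_sq le_rfl hT le_rfl)
    ((f_energy_integrable.add g_energy_integrable).const_mul 2) fun s _ => ?_
  calc ‖f' s - g' s‖ ^ 2 ≤ (‖f' s‖ + ‖g' s‖) ^ 2 := by gcongr; exact norm_sub_le _ _
    _ ≤ 2 * (‖f' s‖ ^ 2 + ‖g' s‖ ^ 2) := add_sq_le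

lemma sum_norm_sub_sq_grid_le (hf : IsL2Primitive (n * h) f' f) (hh : 0 ≤ h) :
    ∑ i ∈ Finset.range n, ‖f ((i + 1) * h) - f (i * h)‖ ^ 2 ≤
      h * ∫ u in (0 : ℝ)..(n * h), ‖f' u‖ ^ 2 := by
  rw [← sum_intervalIntegral_grid hh
    (hf.intervalIntegrable_norm_sq le_rfl (by positivity) le_rfl), Finset.mul_sum]
  refine Finset.sum_le_sum fun i hi => ?_
  have succ_le : (i + 1 : ℝ) ≤ n := by exact_mod_cast Finset.mem_range.1 hi
  have increment_le := hf.norm_sub_sq_le (a := i * h) (b := (i + 1) * h) (by positivity)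
    (by linarith) (by gcongr)
  rwa [← sub_mul, add_sub_cancel_left, one_mul] at increment_le

lemma integral_norm_sq_le_grid (hf : IsL2Primitive (n * h) f' f) (hh : 0 ≤ h) :
    ∫ s in (0 : ℝ)..(n * h), ‖f s‖ ^ 2 ≤
      2 * h ^ 2 * (∫ u in (0 : ℝ)..(n * h), ‖f' u‖ ^ 2) +
        2 * h * ∑ i ∈ Finset.range n, ‖f (i * h)‖ ^ 2 := by
  have nh_nonneg : 0 ≤ n * h := by positivity
  rw [← sum_intervalIntegral_grid hh (hf.intervalIntegrable_norm_sq_self nh_nonneg),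
    ← sum_intervalIntegral_grid hh (hf.intervalIntegrable_norm_sq le_rfl nh_nonneg le_rfl),
    Finset.mul_sum, Finset.mul_sum, ← Finset.sum_add_distrib]
  refine Finset.sum_le_sum fun i hi => ?_
  have succ_le : (i + 1 : ℝ) ≤ n := by exact_mod_cast Finset.mem_range.1 hi
  have cell_le := hf.integral_norm_sq_le_of_le (a := i * h) (b := (i + 1) * h) (by positivity)
    (by linarith) (by gcongr)
  rwa [← sub_mul, add_sub_cancel_left, one_mul] at cell_le

end IsL2Primitive

section GridCode

variable {ι : Type*} {n : ℕ} {h δ : ℝ}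

/-- The code of a path on the time grid `0, h, …, n h`: the increments of its grid values, rounded
down coordinatewise to the lattice `δ ℤ` and measured in units of `δ`. -/
noncomputable def gridCode (n : ℕ) (h δ : ℝ) (f : ℝ → EuclideanSpace ℝ ι) : Fin n × ι → ℤ :=
  fun p => ⌊f ((p.1 + 1) * h) p.2 / δ⌋ - ⌊f (p.1 * h) p.2 / δ⌋

lemma natAbs_floor_sub_floor_le (x y : ℝ) : ((⌊x⌋ - ⌊y⌋).natAbs : ℝ) ≤ (x - y) ^ 2 + 2 := by
  have := Int.floor_le x
  have := Int.floor_le y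
  have := Int.lt_floor_add_one x
  have := Int.lt_floor_add_one y
  rw [Nat.cast_natAbs, Int.cast_abs, Int.cast_sub, abs_le]
  constructor <;> nlinarith [sq_nonneg (x - y - 1), sq_nonneg (x - y + 1)]

lemma floor_eq_floor_of_gridCode_eq {f g : ℝ → EuclideanSpace ℝ ι} (h0 : f 0 = g 0)
    (hcode : gridCode n h δ f = gridCode n h δ g) (a : ι) :
    ∀ i ≤ n, ⌊f (i * h) a / δ⌋ = ⌊g (i * h) a / δ⌋ := by
  intro i
  induction i with
  | zero => simp [h0]
  | succ i ih =>
    intro hi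
    have increment_eq := congrFun hcode (⟨i, hi⟩, a)
    simp only [gridCode, ih (Nat.le_of_succ_le hi), sub_left_inj] at increment_eq
    exact_mod_cast increment_eq

variable [Fintype ι]

lemma sum_natAbs_gridCode_le (f : ℝ → EuclideanSpace ℝ ι) :
    ((∑ p, (gridCode n h δ f p).natAbs : ℕ) : ℝ) ≤
      (∑ i ∈ Finset.range n, ‖f ((i + 1) * h) - f (i * h)‖ ^ 2) / δ ^ 2 +
        2 * (n * Fintype.card ι) := by
  calc ((∑ p, (gridCode n h δ f p).natAbs : ℕ) : ℝ)
      ≤ ∑ p : Fin n × ι, ((f ((p.1 + 1) * h) - f (p.1 * h)) p.2 ^ 2 / δ ^ 2 + 2) := by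
        push_cast
        refine Finset.sum_le_sum fun p _ => (natAbs_floor_sub_floor_le _ _).trans_eq ?_
        rw [PiLp.sub_apply, ← sub_div, div_pow]
    _ = (∑ i : Fin n, ‖f ((i + 1) * h) - f (i * h)‖ ^ 2) / δ ^ 2 +
          2 * (n * Fintype.card ι) := by
        rw [Finset.sum_add_distrib, ← Finset.sum_div, Fintype.sum_prod_type]
        simp only [EuclideanSpace.real_norm_sq_eq, Finset.sum_const, Finset.card_univ,
          Fintype.card_prod, Fintype.card_fin, nsmul_eq_mul, Nat.cast_mul, mul_comm]
    _ = _ := by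
        rw [Fin.sum_univ_eq_sum_range (fun i => ‖f ((i + 1) * h) - f (i * h)‖ ^ 2) n]

lemma norm_sub_sq_le_of_floor_eq_floor {x y : EuclideanSpace ℝ ι} (hδ : 0 < δ)
    (hxy : ∀ a, ⌊x a / δ⌋ = ⌊y a / δ⌋) : ‖x - y‖ ^ 2 ≤ Fintype.card ι * δ ^ 2 := by
  rw [EuclideanSpace.real_norm_sq_eq, ← nsmul_eq_mul, ← Finset.card_univ]
  refine Finset.sum_le_card_nsmul _ _ _ fun a _ => sq_le_sq' ?_ ?_
  all_goals
    have abs_lt_one := Int.abs_sub_lt_one_of_floor_eq_floor (hxy a)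
    rw [← sub_div, abs_div, abs_of_pos hδ, div_lt_one hδ, abs_lt] at abs_lt_one
    rw [PiLp.sub_apply]
    linarith

end GridCode

lemma pow_mul_le_pow_mul_exp {b x : ℝ} {n : ℕ} (hb : 1 ≤ b) (hn : n ≤ x + 1) (d : ℕ) :
    b ^ (n * d) ≤ b ^ d * exp (log b * d * x) := by
  have pow_eq (m : ℕ) : b ^ m = exp (log b * m) := by
    rw [← Real.rpow_natCast, Real.rpow_def_of_pos (by linarith)]
  rw [pow_eq, pow_eq, ← Real.exp_add, Real.exp_le_exp, Nat.cast_mul]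
  have log_mul_nonneg : 0 ≤ log b * d := mul_nonneg (Real.log_nonneg hb) d.cast_nonneg
  linarith [mul_le_mul_of_nonneg_left hn log_mul_nonneg]

section CameronMartinBall

variable {d n : ℕ} {t h δ C ε cd : ℝ} {f g : ℝ → EuclideanSpace ℝ (Fin d)}

lemma exists_isL2Primitive_of_mem_CMBall (ht : 0 ≤ t) (hC : 0 ≤ C) (hf : f ∈ CMBall d t C) :
    ∃ f', IsL2Primitive t f' f ∧ ∫ s in (0 : ℝ)..t, ‖f' s‖ ^ 2 ≤ C ^ 2 := by
  obtain ⟨-, f', hf', hf_sq, f_eq, energy_le⟩ := hf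
  rw [intervalIntegrable_iff_integrableOn_Ioc_of_le ht] at hf' hf_sq
  exact ⟨f', ⟨(memLp_two_iff_integrable_sq_norm hf'.aestronglyMeasurable).2 hf_sq, f_eq⟩,
    (Real.sqrt_le_left hC).1 energy_le⟩

lemma exists_isL2Primitive_sub_of_mem_CMBall (ht : 0 ≤ t) (hC : 0 ≤ C) (hf : f ∈ CMBall d t C)
    (hg : g ∈ CMBall d t C) :
    ∃ u', IsL2Primitive t u' (f - g) ∧ ∫ s in (0 : ℝ)..t, ‖u' s‖ ^ 2 ≤ 4 * C ^ 2 := by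
  obtain ⟨f', hf', f_energy⟩ := exists_isL2Primitive_of_mem_CMBall ht hC hf
  obtain ⟨g', hg', g_energy⟩ := exists_isL2Primitive_of_mem_CMBall ht hC hg
  exact ⟨f' - g', hf'.sub hg', (hf'.integral_norm_sq_sub_le hg' ht).trans (by linarith)⟩

lemma sum_natAbs_gridCode_le_of_mem_CMBall (hh : 0 ≤ h) (hC : 0 ≤ C)
    (hf : f ∈ CMBall d (n * h) C) :
    ((∑ p, (gridCode n h δ f p).natAbs : ℕ) : ℝ) ≤ h * C ^ 2 / δ ^ 2 + 2 * (n * d) := by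
  obtain ⟨f', hf', energy_le⟩ := exists_isL2Primitive_of_mem_CMBall (by positivity) hC hf
  have sum_increments_le := (hf'.sum_norm_sub_sq_grid_le hh).trans
    (mul_le_mul_of_nonneg_left energy_le hh)
  refine (sum_natAbs_gridCode_le f).trans ?_
  rw [Fintype.card_fin]
  gcongr

lemma integral_norm_sub_sq_le_of_gridCode_eq (hh : 0 ≤ h) (hδ : 0 < δ) (hC : 0 ≤ C)
    (hf : f ∈ CMBall d (n * h) C) (hg : g ∈ CMBall d (n * h) C)
    (hcode : gridCode n h δ f = gridCode n h δ g) :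
    ∫ s in (0 : ℝ)..(n * h), ‖f s - g s‖ ^ 2 ≤
      8 * (h * C) ^ 2 + 2 * (d * (n * h)) * δ ^ 2 := by
  obtain ⟨u', hu', energy_le⟩ :=
    exists_isL2Primitive_sub_of_mem_CMBall (by positivity) hC hf hg
  have grid_values_le : ∑ i ∈ Finset.range n, ‖(f - g) (i * h)‖ ^ 2 ≤ n * (d * δ ^ 2) := by
    have floor_eq := floor_eq_floor_of_gridCode_eq (hf.1.trans hg.1.symm) hcode
    refine (Finset.sum_le_card_nsmul _ _ (d * δ ^ 2) fun i hi => ?_).trans_eq (by simp)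
    simpa using norm_sub_sq_le_of_floor_eq_floor hδ
      fun a => floor_eq a i (Finset.mem_range.1 hi).le
  calc ∫ s in (0 : ℝ)..(n * h), ‖f s - g s‖ ^ 2
      ≤ 2 * h ^ 2 * (∫ s in (0 : ℝ)..(n * h), ‖u' s‖ ^ 2) +
          2 * h * ∑ i ∈ Finset.range n, ‖(f - g) (i * h)‖ ^ 2 := hu'.integral_norm_sq_le_grid hh
    _ ≤ 2 * h ^ 2 * (4 * C ^ 2) + 2 * h * (n * (d * δ ^ 2)) := by gcongr
    _ = _ := by ring

lemma exists_L2_net_CMBall_of_mesh_le (hd : 0 < d) (hn : 0 < n) (hh : 0 < h) (hC : 0 ≤ C)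
    (hε : 0 < ε) (hmesh : 4 * (h * C) ≤ ε) :
    ∃ S : Finset (ℝ → EuclideanSpace ℝ (Fin d)), ↑S ⊆ CMBall d (n * h) C ∧
      S.card ≤ 24 ^ (n * d) ∧
      ∀ f ∈ CMBall d (n * h) C, ∃ k ∈ S, ∫ s in (0 : ℝ)..(n * h), ‖f s - k s‖ ^ 2 ≤ ε ^ 2 := by
  set δ := ε / (2 * √(d * (n * h)))
  have hδ : 0 < δ := by positivity
  have δ_sq : δ ^ 2 = ε ^ 2 / (4 * (d * (n * h))) := by
    rw [div_pow, mul_pow, Real.sq_sqrt (by positivity)]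
    norm_num
  have mesh_sq_le : (4 * (h * C)) ^ 2 ≤ ε ^ 2 := by gcongr
  have code_mem : Set.MapsTo (gridCode n h δ) (CMBall d (n * h) C)
      (intL1Ball (Fin n × Fin d) (3 * (n * d))) := fun f hf => by
    have increments_le : h * C ^ 2 / δ ^ 2 ≤ n * d := by
      rw [div_le_iff₀ (by positivity), δ_sq]
      field_simp
      linarith [sq_nonneg (h * C)]
    rw [Finset.mem_coe, mem_intL1Ball, ← Nat.cast_le (α := ℝ)]
    refine (sum_natAbs_gridCode_le_of_mem_CMBall hh.le hC hf).trans ?_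
    push_cast
    linarith
  obtain ⟨S, S_subset, card_le, S_code⟩ := exists_finset_subset_card_le_of_mapsTo _ code_mem
  refine ⟨S, S_subset, ?_, fun f hf => ?_⟩
  · refine (card_le.trans card_intL1Ball_le).trans_eq ?_
    rw [Fintype.card_prod, Fintype.card_fin, Fintype.card_fin, pow_mul, ← mul_pow]
    norm_num
  · obtain ⟨k, hk, code_eq⟩ := S_code f hf
    refine ⟨k, hk, (integral_norm_sub_sq_le_of_gridCode_eq hh.le hδ hC hf (S_subset hk)
      code_eq.symm).trans ?_⟩
    have rounding_eq : 2 * (d * (n * h)) * δ ^ 2 = ε ^ 2 / 2 := by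
      rw [δ_sq]
      field_simp
      norm_num
    linarith

theorem exists_L2_net_CMBall (hd : 0 < d) (ht : 0 < t) (hC : 0 ≤ C) (hε : 0 < ε) :
    ∃ S : Finset (ℝ → EuclideanSpace ℝ (Fin d)), ↑S ⊆ CMBall d t C ∧
      (S.card : ℝ) ≤ 24 ^ d * exp (log 24 * d * (4 * C * t / ε)) ∧
      ∀ f ∈ CMBall d t C, ∃ k ∈ S, ∫ s in (0 : ℝ)..t, ‖f s - k s‖ ^ 2 ≤ ε ^ 2 := by
  set x := 4 * C * t / ε
  set n := ⌊x⌋₊ + 1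
  have x_le : x ≤ n := by exact_mod_cast (Nat.lt_floor_add_one x).le
  have n_le : (n : ℝ) ≤ x + 1 := by
    push_cast [n]
    linarith [Nat.floor_le (show 0 ≤ x by positivity)]
  have n_mul_step : n * (t / n) = t := mul_div_cancel₀ t (Nat.cast_ne_zero.2 (Nat.succ_ne_zero _))
  have mesh_le : 4 * (t / n * C) ≤ ε := by
    have n_pos : (0 : ℝ) < n := Nat.cast_pos.2 (Nat.succ_pos _)
    calc 4 * (t / n * C) = 4 * C * t / n := by ring
      _ ≤ ε := by rwa [div_le_iff₀ n_pos, mul_comm ε, ← div_le_iff₀ hε]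
  obtain ⟨S, S_subset, card_le, hS⟩ :=
    exists_L2_net_CMBall_of_mesh_le hd (Nat.succ_pos _) (by positivity : 0 < t / n) hC hε mesh_le
  rw [n_mul_step] at S_subset hS
  have card_le_real : (S.card : ℝ) ≤ 24 ^ (n * d) := by exact_mod_cast card_le
  exact ⟨S, S_subset, card_le_real.trans (pow_mul_le_pow_mul_exp (by norm_num) n_le d), hS⟩

lemma intervalIntegrable_norm_sub_sq_of_mem_CMBall (ht : 0 ≤ t) (hC : 0 ≤ C)
    (hf : f ∈ CMBall d t C) (hg : g ∈ CMBall d t C) :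
    IntervalIntegrable (fun s => ‖f s - g s‖ ^ 2) volume 0 t := by
  obtain ⟨u', hu', -⟩ := exists_isL2Primitive_sub_of_mem_CMBall ht hC hf hg
  exact hu'.intervalIntegrable_norm_sq_self ht

variable {Γ : EuclideanSpace ℝ (Fin d) → ℝ}

lemma intervalIntegrable_one_sub_comp_sub_of_mem_CMBall (hΓ_meas : Measurable Γ)
    (hΓ_le : ∀ z, Γ z ≤ 1) (hΓ : ∀ z, 1 - Γ z ≤ cd * ‖z‖ ^ 2) (ht : 0 ≤ t) (hC : 0 ≤ C)
    (hf : f ∈ CMBall d t C) (hg : g ∈ CMBall d t C) :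
    IntervalIntegrable (fun s => 1 - Γ (f s - g s)) volume 0 t := by
  obtain ⟨u', hu', -⟩ := exists_isL2Primitive_sub_of_mem_CMBall ht hC hf hg
  have sub_aemeasurable : AEMeasurable (f - g) (volume.restrict (Set.Ioc 0 t)) :=
    ((hu'.continuousOn ht).mono Set.Ioc_subset_Icc_self).aemeasurable measurableSet_Ioc
  have bound_integrable :=
    (intervalIntegrable_norm_sub_sq_of_mem_CMBall ht hC hf hg).const_mul cd
  rw [intervalIntegrable_iff_integrableOn_Ioc_of_le ht] at bound_integrable ⊢
  refine bound_integrable.mono'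
    ((hΓ_meas.comp_aemeasurable sub_aemeasurable).const_sub 1).aestronglyMeasurable
    (Filter.Eventually.of_forall fun s => ?_)
  rw [Real.norm_of_nonneg (sub_nonneg.2 (hΓ_le _))]
  exact hΓ _

lemma dGamma_le_sqrt_integral_norm_sub_sq (hΓ : ∀ z, 1 - Γ z ≤ cd * ‖z‖ ^ 2) (ht : 0 ≤ t)
    (hΓfg : IntervalIntegrable (fun s => 1 - Γ (f s - g s)) volume 0 t)
    (hfg : IntervalIntegrable (fun s => ‖f s - g s‖ ^ 2) volume 0 t) :
    dGamma d t Γ f g ≤ √(2 * cd * ∫ s in (0 : ℝ)..t, ‖f s - g s‖ ^ 2) := by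
  rw [dGamma, mul_assoc, ← intervalIntegral.integral_const_mul cd]
  gcongr
  exact intervalIntegral.integral_mono_on ht hΓfg (hfg.const_mul cd) fun s _ => hΓ _

end CameronMartinBall

theorem stmt6_general {d : ℕ} {cd t C ε : ℝ} (hd : 0 < d) (hcd : 0 < cd) (ht : 0 < t)
    (hC : 0 ≤ C) (hε : 0 < ε) :
    ∃ S : Finset (ℝ → EuclideanSpace ℝ (Fin d)), ↑S ⊆ CMBall d t C ∧
      (S.card : ℝ) ≤ 24 ^ d * exp (log 24 * d * (4 * √(2 * cd)) * C * t / ε) ∧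
      ∀ Γ : EuclideanSpace ℝ (Fin d) → ℝ, Measurable Γ → (∀ z, Γ z ≤ 1) →
        (∀ z, 1 - Γ z ≤ cd * ‖z‖ ^ 2) → ∀ f ∈ CMBall d t C, ∃ k ∈ S,
          IntervalIntegrable (fun s => 1 - Γ (f s - k s)) volume 0 t ∧
            dGamma d t Γ f k ≤ ε := by
  obtain ⟨S, S_subset, card_le, S_net⟩ :=
    exists_L2_net_CMBall hd ht hC (by positivity : 0 < ε / √(2 * cd))
  refine ⟨S, S_subset, card_le.trans_eq ?_, fun Γ hΓ_meas hΓ_le hΓ f hf => ?_⟩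
  · congr 2
    field_simp
  · obtain ⟨k, hk, L2_le⟩ := S_net f hf
    have integrable :=
      intervalIntegrable_one_sub_comp_sub_of_mem_CMBall hΓ_meas hΓ_le hΓ ht.le hC hf (S_subset hk)
    refine ⟨k, hk, integrable, (dGamma_le_sqrt_integral_norm_sub_sq hΓ ht.le integrable
      (intervalIntegrable_norm_sub_sq_of_mem_CMBall ht.le hC hf (S_subset hk))).trans ?_⟩
    rw [Real.sqrt_le_left hε.le]
    rwa [div_pow, Real.sq_sqrt (by positivity), le_div_iff₀' (by positivity)] at L2_le

/-- Lemma 2 of the paper: there are constants `c₁ > 1`, `c₂ > 0`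
depending only on `d` and `c_d` such that for every correlation `Γ` with
`0 ≤ Γ ≤ 1` and `1 − Γ(z) ≤ c_d ‖z‖²`, and all `t, C, ε > 0`, the ball
`H_t(C)` admits an `ε`-net in `d_Γ` of cardinality at most
`c₁ · exp(c₂ C t / ε)`. -/
theorem stmt6 (d : ℕ) (hd : 1 ≤ d) (cd : ℝ) (hcd : 0 < cd) :
    ∃ c₁ c₂ : ℝ, 1 < c₁ ∧ 0 < c₂ ∧
      ∀ Γ : EuclideanSpace ℝ (Fin d) → ℝ, Measurable Γ →
        (∀ z, 0 ≤ Γ z) → (∀ z, Γ z ≤ 1) → (∀ z, 1 - Γ z ≤ cd * ‖z‖ ^ 2) →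
        ∀ t C ε : ℝ, 0 < t → 0 < C → 0 < ε →
          ∃ S : Finset (ℝ → EuclideanSpace ℝ (Fin d)),
            (S.card : ℝ) ≤ c₁ * Real.exp (c₂ * C * t / ε) ∧
            ∀ f ∈ CMBall d t C, ∃ k ∈ S, dGamma d t Γ f k ≤ ε := by
  refine ⟨24 ^ d, log 24 * d * (4 * √(2 * cd)), one_lt_pow₀ (by norm_num) (by omega),
    by positivity, fun Γ hΓ_meas _ hΓ_le hΓ t C ε ht hC hε => ?_⟩
  obtain ⟨S, -, card_le, S_net⟩ := stmt6_general hd hcd ht hC.le hε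
  exact ⟨S, card_le, fun f hf =>
    (S_net Γ hΓ_meas hΓ_le hΓ f hf).imp fun _ => And.imp_right And.right⟩
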